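/- Let n ≥ 2, d ≥ 1, L ≥ 0 be integers with 2L ≤ d, let S ⊆ [n]^∞ be a d-maximal set containing no (L+1)-ball, let w ∈ S, and let ℓ ≥ 0, and let m, k be integers with m + L ≤ k ≤ d. Let t be a template of weight m that is regular with respect to w. Then, writing S^{(ℓ)}_k = {a ∈ S^{(ℓ)} : dist(a,w) = k}, we have |S^{(ℓ)}_k[t]| ≤ Sun(d+n, 2L)·(n/2)^{k−m−L}·binom(2d−m−L, k−m−L) (as real numbers, with Sun(p,0) interpreted as 1). -/

import Mathlib

/-- Hamming distance between infinite words over `Fin n`, as an extended natural number. -/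
noncomputable def hDist (n : ℕ) (a b : ℕ → Fin n) : ℕ∞ := {i | a i ≠ b i}.encard

/-- The `r`-ball around `a`. -/
def hBall (n : ℕ) (a : ℕ → Fin n) (r : ℕ) : Set (ℕ → Fin n) := {x | hDist n x a ≤ (r : ℕ∞)}

/-- `S` is `d`-maximal: it has diameter `d` and any point within distance `d`
of all of `S` already belongs to `S`. -/
def IsDMaximal (n d : ℕ) (S : Set (ℕ → Fin n)) : Prop :=
  (∀ a ∈ S, ∀ b ∈ S, hDist n a b ≤ (d : ℕ∞)) ∧
  (∃ a ∈ S, ∃ b ∈ S, hDist n a b = (d : ℕ∞)) ∧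
  (∀ x : ℕ → Fin n, (∀ s ∈ S, hDist n x s ≤ (d : ℕ∞)) → x ∈ S)

/-- `S` contains an `r`-ball. -/
def ContainsBall (n : ℕ) (S : Set (ℕ → Fin n)) (r : ℕ) : Prop :=
  ∃ a, hBall n a r ⊆ S

/-- `S^(ℓ)`: centers of `ℓ`-balls contained in `S` that are not contained in any
`(ℓ+1)`-ball inside `S`. -/
def Sell (n : ℕ) (S : Set (ℕ → Fin n)) (ℓ : ℕ) : Set (ℕ → Fin n) :=
  {a ∈ S | hBall n a ℓ ⊆ S ∧
    ¬ ∃ b, hBall n a ℓ ⊆ hBall n b (ℓ + 1) ∧ hBall n b (ℓ + 1) ⊆ S}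

/-- A word `a` fits the template `t` (entries `none` are wildcards). -/
def Fits (n : ℕ) (a : ℕ → Fin n) (t : ℕ → Option (Fin n)) : Prop :=
  ∀ i x, t i = some x → a i = x

/-- A template is regular with respect to `w` if it never fixes the letter of `w`. -/
def RegularWrt (n : ℕ) (w : ℕ → Fin n) (t : ℕ → Option (Fin n)) : Prop :=
  ∀ i, t i ≠ some (w i)

/-- A family of `p` sets forming a sunflower: `p` distinct sets whose pairwise
intersections are all equal. -/
def IsSunflowerFam (p : ℕ) (F : Finset (Finset ℕ)) : Prop :=
  F.card = p ∧ ∃ C : Finset ℕ, ∀ A ∈ F, ∀ B ∈ F, A ≠ B → A ∩ B = C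

/-- `Sun p k`: the least `N` such that every family of more than `N` distinct
`k`-element sets contains a `p`-sunflower. -/
noncomputable def Sun (p k : ℕ) : ℕ :=
  sInf {N : ℕ | ∀ F : Finset (Finset ℕ), (∀ A ∈ F, A.card = k) → N < F.card →
    ∃ G ⊆ F, IsSunflowerFam p G}

/-
A template that is regular with respect to `w` is a word `u` with `dist(u, w) = m`, and the words
`a` of `S^{(ℓ)}_k` that fit it satisfy `dist(a, u) = k - m`. The bound is proved by induction on
`q = k - m - L`.

If `q > 0`, choose `c ∈ S` with `dist(u, c) ≥ d - L`, which exists because `S` contains no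
`(L+1)`-ball. Since `dist(a, c) ≤ d`, the defect `dist(a, u) + dist(u, c) - dist(a, c)` of the
triangle inequality is at least `q`, and it is a sum of contributions of those coordinates where
`u` and `c` differ but `u` and `w` agree. Over the letters of the alphabet, the contributions of
one coordinate sum to `n`, and there are few such coordinates because `dist(w, c) ≤ d`. Double
counting the contributions over all `a` reduces the claim to templates with one more fixed letter.

If `q = 0`, all words considered lie at distance `L` from `u`. If there were more than
`Sun(d+n, 2L)` of them, then a sunflower among the symmetric differences of their graphs with that
of `u` would give a word `v`, at a common distance `s > 0` from `d + n` members, whose differences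
from `v` are pairwise disjoint. Every `c ∈ S` differs from `v` at a coordinate set disjoint from
one of these differences, so maximality puts the `(ℓ+s)`-ball around `v` into `S`. This contradicts
the definition of `S^{(ℓ)}`.
-/

open scoped Finset

section HammingDistance

variable {n : ℕ} {a b c u v w : ℕ → Fin n}

/-- The set of coordinates at which `a` and `b` disagree; `hDist n a b` is its cardinality. -/
def diffSet (a b : ℕ → Fin n) : Set ℕ := {i | a i ≠ b i}

theorem mem_diffSet {i : ℕ} : i ∈ diffSet a b ↔ a i ≠ b i := Iff.rfl

theorem encard_diffSet (a b : ℕ → Fin n) : (diffSet a b).encard = hDist n a b := rfl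

theorem diffSet_comm (a b : ℕ → Fin n) : diffSet a b = diffSet b a :=
  Set.ext fun _ => ne_comm

theorem hDist_comm (a b : ℕ → Fin n) : hDist n a b = hDist n b a :=
  congrArg Set.encard (diffSet_comm a b)

theorem hDist_eq_zero : hDist n a b = 0 ↔ a = b := by
  simp [hDist, Set.encard_eq_zero, Set.eq_empty_iff_forall_notMem, funext_iff]

theorem hDist_triangle (a b c : ℕ → Fin n) : hDist n a c ≤ hDist n a b + hDist n b c := by
  refine (Set.encard_le_encard fun i hac => ?_).trans (Set.encard_union_le _ _)
  by_contra h
  simp only [Set.mem_union, Set.mem_ofPred_eq, not_or, not_not] at h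
  exact hac (h.1.trans h.2)

theorem hDist_add_hDist_of_disjoint (h : Disjoint (diffSet a b) (diffSet b c)) :
    hDist n a b + hDist n b c = hDist n a c := by
  simp only [← encard_diffSet, ← Set.encard_union_eq h]
  congr 1
  ext i
  have hi : ¬ (a i ≠ b i ∧ b i ≠ c i) := fun hi => Set.disjoint_left.mp h hi.1 hi.2
  simp only [Set.mem_union, mem_diffSet]
  grind

theorem diffSet_update_self {i : ℕ} {x : Fin n} (hx : x ≠ a i) :
    diffSet (Function.update a i x) a = {i} := by
  ext j
  by_cases hj : j = i <;> simp [mem_diffSet, hj, hx]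

theorem hDist_update_self {i : ℕ} {x : Fin n} (hx : x ≠ a i) :
    hDist n (Function.update a i x) a = 1 := by
  rw [← encard_diffSet, diffSet_update_self hx, Set.encard_singleton]

theorem hDist_update_of_eq {i : ℕ} {x : Fin n} (hi : u i = w i) (hx : x ≠ w i) :
    hDist n (Function.update u i x) w = hDist n u w + 1 := by
  have hx' : x ≠ u i := hi ▸ hx
  have hdisj : Disjoint (diffSet (Function.update u i x) u) (diffSet u w) := by
    simp [diffSet_update_self hx', mem_diffSet, hi]
  rw [← hDist_add_hDist_of_disjoint hdisj, hDist_update_self hx', add_comm]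

theorem exists_hDist_le_one_of_hDist_le_add_one {s : ℕ} (h : hDist n a v ≤ s + 1) :
    ∃ b, hDist n a b ≤ 1 ∧ hDist n b v ≤ s := by
  obtain rfl | hav := eq_or_ne a v
  · exact ⟨a, by simp [hDist_eq_zero.mpr rfl], by simp [hDist_eq_zero.mpr rfl]⟩
  obtain ⟨i, hi⟩ := Function.ne_iff.mp hav
  refine ⟨Function.update a i (v i), (hDist_comm _ _).trans_le (hDist_update_self hi.symm).le, ?_⟩
  have hdist := hDist_update_of_eq (u := Function.update a i (v i)) (by simp) hi
  simp only [Function.update_idem, Function.update_eq_self] at hdist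
  rwa [hdist, ENat.add_le_add_iff_right ENat.one_ne_top] at h

theorem exists_hDist_eq_and_hDist_eq_add (hn : 2 ≤ n) (hac : hDist n a c ≠ ⊤) (r : ℕ) :
    ∃ b, hDist n b a = r ∧ hDist n b c = r + hDist n a c := by
  classical
  have : Nontrivial (Fin n) := Fin.nontrivial_iff_two_le.mpr hn
  choose g hg using fun i => exists_ne (c i)
  have hfin : (diffSet a c).Finite := Set.encard_ne_top_iff.mp hac
  obtain ⟨Y, hY, hYcard⟩ := hfin.infinite_compl.exists_subset_card_eq r
  have hYac : ∀ i ∈ Y, a i = c i := fun i hi => not_not.mp (hY hi)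
  have hdiff : diffSet (Y.piecewise g a) a = Y := by
    ext i
    by_cases hi : i ∈ Y <;> simp [mem_diffSet, hi]
    simpa [hYac i hi] using hg i
  have hdisj : Disjoint (diffSet (Y.piecewise g a) a) (diffSet a c) := by
    rw [hdiff]
    exact Set.subset_compl_iff_disjoint_right.mp hY
  have hdist : hDist n (Y.piecewise g a) a = r := by
    rw [← encard_diffSet, hdiff, Set.encard_coe_eq_coe_finsetCard, hYcard]
  exact ⟨_, hdist, by rw [← hDist_add_hDist_of_disjoint hdisj, hdist]⟩

theorem hBall_subset_hBall {r R : ℕ} (h : hDist n a b + r ≤ R) : hBall n a r ⊆ hBall n b R :=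
  fun x hx => calc
    hDist n x b ≤ hDist n x a + hDist n a b := hDist_triangle x a b
    _ ≤ r + hDist n a b := by gcongr; exact hx
    _ ≤ R := by rwa [add_comm]

end HammingDistance

section MaximalSets

variable {n d ℓ : ℕ} {S : Set (ℕ → Fin n)} {a c v : ℕ → Fin n}

namespace IsDMaximal

theorem hDist_le (hmax : IsDMaximal n d S) (ha : a ∈ S) (hc : c ∈ S) : hDist n a c ≤ d :=
  hmax.1 a ha c hc

theorem hBall_subset_iff (hmax : IsDMaximal n d S) (hn : 2 ≤ n) {r : ℕ} :
    hBall n v r ⊆ S ↔ ∀ c ∈ S, hDist n v c + r ≤ d := by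
  refine ⟨fun hball c hc => ?_, fun h x hx => hmax.2.2 x fun c hc => ?_⟩
  · have hvS : v ∈ S := hball (by simp [hBall, hDist_eq_zero.mpr rfl])
    have hvc : hDist n v c ≠ ⊤ := ne_top_of_le_ne_top (ENat.natCast_ne_top d) (hmax.hDist_le hvS hc)
    obtain ⟨b, hbv, hbc⟩ := exists_hDist_eq_and_hDist_eq_add hn hvc r
    rw [add_comm, ← hbc]
    exact hmax.hDist_le (hball hbv.le) hc
  · calc hDist n x c ≤ hDist n x v + hDist n v c := hDist_triangle x v c
      _ ≤ r + hDist n v c := by gcongr; exact hx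
      _ ≤ d := by rw [add_comm]; exact h c hc

theorem exists_le_hDist_add (hmax : IsDMaximal n d S) (hn : 2 ≤ n) {L : ℕ}
    (hball : ¬ ContainsBall n S (L + 1)) (u : ℕ → Fin n) :
    ∃ c ∈ S, (d : ℕ∞) ≤ hDist n u c + L := by
  have hu : ¬ ∀ c ∈ S, hDist n u c + (L + 1 : ℕ) ≤ d :=
    fun h => hball ⟨u, (hmax.hBall_subset_iff hn).mpr h⟩
  push Not at hu
  obtain ⟨c, hc, hdc⟩ := hu
  refine ⟨c, hc, Order.le_of_lt_add_one ?_⟩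
  simpa [add_assoc] using hdc

end IsDMaximal

theorem not_hBall_subset_of_mem_sell {s : ℕ} (ha : a ∈ Sell n S ℓ) (hav : hDist n a v ≤ s + 1) :
    ¬ hBall n v (ℓ + (s + 1)) ⊆ S := by
  intro hball
  obtain ⟨b, hab, hbv⟩ := exists_hDist_le_one_of_hDist_le_add_one hav
  refine ha.2.2 ⟨b, hBall_subset_hBall ?_, (hBall_subset_hBall ?_).trans hball⟩
  · calc hDist n a b + ℓ ≤ 1 + ℓ := by gcongr
      _ = (ℓ + 1 : ℕ) := by push_cast; ring
  · calc hDist n b v + (ℓ + 1 : ℕ) ≤ s + (ℓ + 1 : ℕ) := by gcongr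
      _ = (ℓ + (s + 1) : ℕ) := by push_cast; ring

theorem hDist_add_le_of_pairwiseDisjoint_diffSet {s : ℕ} {J : Finset (ℕ → Fin n)}
    (hJ : d + 1 < #J) (hdisj : (J : Set (ℕ → Fin n)).PairwiseDisjoint fun a => diffSet a v)
    (hv : ∀ a ∈ J, hDist n a v = s) (hc : ∀ a ∈ J, hDist n a c + ℓ ≤ d) :
    hDist n v c + (ℓ + s : ℕ) ≤ d := by
  classical
  obtain ⟨b, hb, hbc⟩ : ∃ b ∈ J, Disjoint (diffSet b v) (diffSet v c) := by
    by_contra! hmeet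
    choose! x hxv hxc using fun b hb => Set.not_disjoint_iff.mp (hmeet b hb)
    obtain ⟨b, hb⟩ : J.Nonempty := Finset.card_pos.mp (by lia)
    have hinj : Set.InjOn x (J.erase b) := fun e he e' he' hee => by_contra fun hne =>
      Set.disjoint_left.mp (hdisj (Finset.mem_of_mem_erase he) (Finset.mem_of_mem_erase he') hne)
        (hxv e (Finset.mem_of_mem_erase he)) (hee ▸ hxv e' (Finset.mem_of_mem_erase he'))
    have hsub : (((J.erase b).image x : Finset ℕ) : Set ℕ) ⊆ diffSet b c := by
      simp only [Finset.coe_image, Set.image_subset_iff]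
      intro e he
      obtain ⟨hne, he⟩ := Finset.mem_erase.mp he
      have hbv : b (x e) = v (x e) :=
        not_not.mp (Set.disjoint_left.mp (hdisj he hb hne) (hxv e he))
      simpa [mem_diffSet, hbv] using hxc e he
    have hcard : ((#J - 1 : ℕ) : ℕ∞) ≤ d := calc
      ((#J - 1 : ℕ) : ℕ∞) = (((J.erase b).image x : Finset ℕ) : Set ℕ).encard := by
        rw [Set.encard_coe_eq_coe_finsetCard, Finset.card_image_of_injOn hinj,
          Finset.card_erase_of_mem hb]
      _ ≤ hDist n b c := Set.encard_le_encard hsub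
      _ ≤ d := le_self_add.trans (hc b hb)
    have : #J - 1 ≤ d := mod_cast hcard
    lia
  calc hDist n v c + (ℓ + s : ℕ) = hDist n b v + hDist n v c + ℓ := by
        rw [hv b hb]; push_cast; ring
    _ ≤ d := by rw [hDist_add_hDist_of_disjoint hbc]; exact hc b hb

theorem IsDMaximal.eq_zero_of_pairwiseDisjoint_diffSet (hmax : IsDMaximal n d S) (hn : 2 ≤ n)
    {s : ℕ} {J : Finset (ℕ → Fin n)} (hJ : d + 1 < #J) (hJS : ∀ a ∈ J, a ∈ Sell n S ℓ)
    (hdisj : (J : Set (ℕ → Fin n)).PairwiseDisjoint fun a => diffSet a v)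
    (hv : ∀ a ∈ J, hDist n a v = s) : s = 0 := by
  by_contra hs
  obtain ⟨s, rfl⟩ := Nat.exists_eq_succ_of_ne_zero hs
  obtain ⟨a, ha⟩ : J.Nonempty := Finset.card_pos.mp (by lia)
  refine not_hBall_subset_of_mem_sell (hJS a ha) (hv a ha).le ?_
  exact (hmax.hBall_subset_iff hn).mpr fun c hc =>
    hDist_add_le_of_pairwiseDisjoint_diffSet hJ hdisj hv fun e he =>
      (hmax.hBall_subset_iff hn).mp (hJS e he).2.1 c hc

end MaximalSets

section Sunflowers

open scoped Nat

theorem exists_isSunflowerFam_or_exists_hitting_set {p k : ℕ} {C : Finset ℕ}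
    {F : Finset (Finset ℕ)} (hF : ∀ A ∈ F, C ⊆ A ∧ #(A \ C) = k + 1) :
    (∃ G ⊆ F, IsSunflowerFam p G) ∨
      ∃ U : Finset ℕ, #U ≤ p * (k + 1) ∧ ∀ A ∈ F, ∃ x ∈ U, x ∈ A \ C := by
  classical
  let disjointAwayFromC : Finset (Finset (Finset ℕ)) :=
    {G ∈ F.powerset | ∀ A ∈ G, ∀ B ∈ G, A ≠ B → A ∩ B = C}
  obtain ⟨G, hmaximal⟩ := disjointAwayFromC.exists_maximal ⟨∅, by simp [disjointAwayFromC]⟩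
  obtain ⟨hGF, hG⟩ : G ⊆ F ∧ ∀ A ∈ G, ∀ B ∈ G, A ≠ B → A ∩ B = C := by
    simpa [disjointAwayFromC] using hmaximal.prop
  obtain hp | hp := le_or_gt p #G
  · obtain ⟨H, hHG, hH⟩ := Finset.exists_subset_card_eq hp
    exact .inl ⟨H, hHG.trans hGF, hH, C, fun A hA B hB => hG A (hHG hA) B (hHG hB)⟩
  refine .inr ⟨G.biUnion (· \ C), ?_, fun A hA => ?_⟩
  · calc #(G.biUnion (· \ C)) ≤ #G * (k + 1) :=
          Finset.card_biUnion_le_card_mul _ _ _ fun A hA => (hF A (hGF hA)).2.le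
      _ ≤ p * (k + 1) := by gcongr
  · by_contra! hmiss
    have hAG : ∀ B ∈ G, A ∩ B = C := fun B hB => by
      refine (Finset.subset_inter (hF A hA).1 (hF B (hGF hB)).1).antisymm' fun x hx => ?_
      obtain ⟨hxA, hxB⟩ := Finset.mem_inter.mp hx
      by_contra hxC
      exact hmiss x (Finset.mem_biUnion.mpr ⟨B, hB, Finset.mem_sdiff.mpr ⟨hxB, hxC⟩⟩)
        (Finset.mem_sdiff.mpr ⟨hxA, hxC⟩)
    have hinsert : insert A G ∈ disjointAwayFromC := by
      simp only [disjointAwayFromC, Finset.mem_filter, Finset.mem_powerset]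
      exact ⟨Finset.insert_subset hA hGF, by grind [Finset.inter_comm]⟩
    have hAmem : A ∈ G :=
      hmaximal.le_of_ge hinsert (Finset.subset_insert A G) (Finset.mem_insert_self A G)
    have hAC : A = C := by simpa using hAG A hAmem
    simpa [hAC] using (hF A hA).2

theorem exists_isSunflowerFam_of_pow_mul_factorial_lt_card {p k : ℕ} {C : Finset ℕ}
    {F : Finset (Finset ℕ)} (hF : ∀ A ∈ F, C ⊆ A ∧ #(A \ C) = k) (hcard : p ^ k * k ! < #F) :
    ∃ G ⊆ F, IsSunflowerFam p G := by
  induction k generalizing C F with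
  | zero =>
    have hFC : F ⊆ {C} := fun A hA => by
      obtain ⟨hCA, hAC⟩ := hF A hA
      rw [Finset.card_eq_zero, Finset.sdiff_eq_empty_iff_subset] at hAC
      exact Finset.mem_singleton.mpr (hAC.antisymm hCA)
    have hle : #F ≤ 1 := by simpa using Finset.card_le_card hFC
    simp only [pow_zero, Nat.factorial_zero, mul_one] at hcard
    lia
  | succ k ih =>
    obtain hsun | ⟨U, hUcard, hU⟩ :=
      exists_isSunflowerFam_or_exists_hitting_set (p := p) hF
    · exact hsun
    choose! f hfU hfA using hU
    obtain ⟨x, -, hx⟩ := Finset.exists_lt_card_fiber_of_mul_lt_card_of_maps_to hfU <| calc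
      #U * (p ^ k * k !) ≤ p * (k + 1) * (p ^ k * k !) := by gcongr
      _ = p ^ (k + 1) * (k + 1)! := by rw [Nat.factorial_succ, pow_succ]; ring
      _ < #F := hcard
    obtain ⟨G, hGF, hG⟩ := ih (C := insert x C) (F := {A ∈ F | f A = x}) (fun A hA => by
      obtain ⟨hAF, rfl⟩ := Finset.mem_filter.mp hA
      obtain ⟨hCA, hAC⟩ := hF A hAF
      refine ⟨Finset.insert_subset (Finset.mem_sdiff.mp (hfA A hAF)).1 hCA, ?_⟩
      rw [Finset.sdiff_insert, Finset.card_erase_of_mem (hfA A hAF), hAC, Nat.add_sub_cancel]) hx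
    exact ⟨G, hGF.trans (Finset.filter_subset _ _), hG⟩

theorem exists_isSunflowerFam_of_sun_lt_card {p k : ℕ} {F : Finset (Finset ℕ)}
    (hF : ∀ A ∈ F, #A = k) (hcard : Sun p k < #F) : ∃ G ⊆ F, IsSunflowerFam p G :=
  Nat.sInf_mem (s := {N | ∀ F : Finset (Finset ℕ), (∀ A ∈ F, #A = k) → N < #F →
      ∃ G ⊆ F, IsSunflowerFam p G})
    ⟨p ^ k * k !, fun _ hF => exists_isSunflowerFam_of_pow_mul_factorial_lt_card (C := ∅)
      fun A hA => ⟨A.empty_subset, by simpa using hF A hA⟩⟩ F hF hcard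

theorem exists_inter_eq_of_sun_lt_card {ι α : Type*} [Countable α] {p k : ℕ} {F : Finset ι}
    {g : ι → Set α} (hinj : Set.InjOn g F) (hg : ∀ a ∈ F, (g a).encard = k)
    (hcard : Sun p k < #F) :
    ∃ J ⊆ F, #J = p ∧ ∃ C, ∀ a ∈ J, ∀ b ∈ J, a ≠ b → g a ∩ g b = C := by
  classical
  obtain ⟨e, he⟩ := exists_injective_nat α
  have hcode : ∀ a ∈ F, ∃ A : Finset ℕ, (A : Set ℕ) = e '' g a := fun a ha =>
    ((Set.finite_of_encard_eq_coe (hg a ha)).image e).exists_finset_coe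
  choose! A hA using hcode
  have hAinj : Set.InjOn A F := fun a ha b hb hab => hinj ha hb <|
    he.image_injective (by rw [← hA a ha, ← hA b hb, hab])
  have hAcard : ∀ a ∈ F, #(A a) = k := fun a ha => by
    rw [← ENat.natCast_inj, ← Set.encard_coe_eq_coe_finsetCard, hA a ha, he.encard_image, hg a ha]
  obtain ⟨G, hGF, hGcard, C, hC⟩ := exists_isSunflowerFam_of_sun_lt_card
    (Finset.forall_mem_image.mpr hAcard) (by rwa [Finset.card_image_of_injOn hAinj])
  obtain ⟨J, hJF, rfl⟩ := Finset.subset_image_iff.mp hGF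
  refine ⟨J, hJF, by rwa [Finset.card_image_of_injOn (hAinj.mono hJF)] at hGcard, e ⁻¹' C, ?_⟩
  intro a ha b hb hab
  have hAab := hC _ (Finset.mem_image_of_mem A ha) _ (Finset.mem_image_of_mem A hb)
    fun h => hab (hAinj (hJF ha) (hJF hb) h)
  rw [← hAab, Finset.coe_inter, hA a (hJF ha), hA b (hJF hb), ← Set.image_inter he,
    Set.preimage_image_eq _ he]

end Sunflowers

section WordSunflowers

variable {n : ℕ} {a u : ℕ → Fin n}

/-- The symmetric difference of the graphs of `a` and `u`. Recording both letters at each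
coordinate where the words differ makes words into sets of size `2 * hDist n a u`, and makes the
core of a sunflower of such sets remember the coordinates it fixes. -/
def graphSymmDiff (u a : ℕ → Fin n) : Set (ℕ × Fin n) :=
  symmDiff (Set.univ.graphOn a) (Set.univ.graphOn u)

theorem mem_graphSymmDiff {i : ℕ} {x : Fin n} :
    (i, x) ∈ graphSymmDiff u a ↔ a i ≠ u i ∧ (a i = x ∨ u i = x) := by
  simp only [graphSymmDiff, Set.mem_symmDiff, Set.mem_graphOn, Set.mem_univ, true_and]
  grind

theorem graphSymmDiff_injective (u : ℕ → Fin n) : Function.Injective (graphSymmDiff u) :=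
  (symmDiff_left_injective _).comp fun a b hab => funext fun i => by
    simpa using (Set.ext_iff.mp hab (i, b i))

theorem graphOn_univ_sdiff_graphOn_univ (a u : ℕ → Fin n) :
    Set.univ.graphOn a \ Set.univ.graphOn u = (diffSet a u).graphOn a := by
  ext ⟨i, x⟩
  simp only [Set.mem_sdiff, Set.mem_graphOn, Set.mem_univ, true_and, mem_diffSet]
  grind

theorem encard_graphOn {α β : Type*} (f : α → β) (s : Set α) :
    (s.graphOn f).encard = s.encard :=
  Set.InjOn.encard_image fun _ _ _ _ h => congrArg Prod.fst h

theorem encard_graphSymmDiff (u a : ℕ → Fin n) :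
    (graphSymmDiff u a).encard = 2 * hDist n a u := by
  rw [graphSymmDiff, Set.symmDiff_def, Set.encard_union_eq disjoint_sdiff_sdiff,
    graphOn_univ_sdiff_graphOn_univ, graphOn_univ_sdiff_graphOn_univ, encard_graphOn,
    encard_graphOn, encard_diffSet, encard_diffSet, hDist_comm u a, two_mul]

/- Since the coordinate `i` is in the core, all members of the sunflower differ from `u` at `i`.
There are more members than letters, so two of them have a common letter there, and this letter
is then recorded in the core too. -/
theorem exists_forall_eq_of_mem_core {J : Finset (ℕ → Fin n)} (hJ : n < #J)
    {C : Set (ℕ × Fin n)}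
    (hC : ∀ a ∈ J, ∀ b ∈ J, a ≠ b → graphSymmDiff u a ∩ graphSymmDiff u b = C)
    {i : ℕ} (hi : (i, u i) ∈ C) : ∃ x, ∀ a ∈ J, a i = x := by
  have hJcard : Nontrivial J := by
    rw [← Fintype.one_lt_card_iff_nontrivial, Fintype.card_coe]
    exact Nat.lt_of_le_of_lt (u 0).pos hJ
  have hCsub : ∀ a ∈ J, C ⊆ graphSymmDiff u a := fun a ha => by
    obtain ⟨⟨b, hb⟩, hab⟩ := exists_ne (⟨a, ha⟩ : J)
    rw [← hC a ha b hb fun h => hab (Subtype.ext h.symm)]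
    exact Set.inter_subset_left
  obtain ⟨a, ha, b, hb, hab, habi⟩ := Finset.exists_ne_map_eq_of_card_lt_of_maps_to
    (t := Finset.univ) (f := fun a : ℕ → Fin n => a i) (by simpa using hJ) (by simp)
  have hai : a i ≠ u i := (mem_graphSymmDiff.mp (hCsub a ha hi)).1
  have haC : (i, a i) ∈ C := by
    rw [← hC a ha b hb hab]
    exact ⟨mem_graphSymmDiff.mpr ⟨hai, .inl rfl⟩,
      mem_graphSymmDiff.mpr ⟨habi ▸ hai, .inl habi.symm⟩⟩
  exact ⟨a i, fun e he => (mem_graphSymmDiff.mp (hCsub e he haC)).2.resolve_right hai.symm⟩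

theorem exists_pairwiseDisjoint_diffSet_of_sun_lt_card {p L : ℕ} (hp : n < p)
    {F : Finset (ℕ → Fin n)} (hF : ∀ a ∈ F, hDist n a u = L) (hcard : Sun p (2 * L) < #F) :
    ∃ J ⊆ F, #J = p ∧ ∃ (v : ℕ → Fin n) (s : ℕ), (∀ a ∈ J, hDist n a v = s) ∧
      (J : Set (ℕ → Fin n)).PairwiseDisjoint fun a => diffSet a v := by
  classical
  obtain ⟨J, hJF, rfl, C, hC⟩ := exists_inter_eq_of_sun_lt_card (g := graphSymmDiff u)
    (graphSymmDiff_injective u).injOn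
    (fun a ha => by rw [encard_graphSymmDiff, hF a ha]; norm_cast) hcard
  have : Nonempty (Fin n) := ⟨u 0⟩
  choose! x hx using fun i => exists_forall_eq_of_mem_core (i := i) hp hC
  let v : ℕ → Fin n := fun i => if (i, u i) ∈ C then x i else u i
  have hdiff : ∀ a ∈ J, ∀ i ∈ diffSet a v, (i, u i) ∉ C ∧ a i ≠ u i := fun a ha i hi => by
    by_cases hiC : (i, u i) ∈ C <;> simp_all [mem_diffSet, v]
  have hdist : ∀ a ∈ J, hDist n a v + hDist n v u = L := fun a ha => by
    rw [hDist_add_hDist_of_disjoint, hF a (hJF ha)]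
    exact Set.disjoint_left.mpr fun i hi hiu => hiu (if_neg (hdiff a ha i hi).1)
  refine ⟨J, hJF, rfl, v, L - (hDist n v u).toNat, fun a ha => ?_, fun a ha b hb hab => ?_⟩
  · have hadd := hdist a ha
    obtain ⟨hav, hvu⟩ := WithTop.add_ne_top.mp (hadd ▸ ENat.natCast_ne_top L)
    lift hDist n a v to ℕ using hav with e
    lift hDist n v u to ℕ using hvu with e'
    norm_cast at hadd ⊢
    simp only [ENat.toNat_natCast]
    lia
  · refine Set.disjoint_left.mpr fun i hia hib => (hdiff a ha i hia).1 ?_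
    rw [← hC a ha b hb hab]
    exact ⟨mem_graphSymmDiff.mpr ⟨(hdiff a ha i hia).2, .inr rfl⟩,
      mem_graphSymmDiff.mpr ⟨(hdiff b hb i hib).2, .inr rfl⟩⟩

end WordSunflowers

theorem IsDMaximal.card_le_sun {n d ℓ L : ℕ} {S : Set (ℕ → Fin n)} {u : ℕ → Fin n}
    (hmax : IsDMaximal n d S) (hn : 2 ≤ n) (hd : 1 ≤ d) {F : Finset (ℕ → Fin n)}
    (hFS : ∀ a ∈ F, a ∈ Sell n S ℓ) (hFu : ∀ a ∈ F, hDist n a u = L) :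
    #F ≤ Sun (d + n) (2 * L) := by
  by_contra! hcard
  obtain ⟨J, hJF, hJcard, v, s, hv, hdisj⟩ :=
    exists_pairwiseDisjoint_diffSet_of_sun_lt_card (p := d + n) (by lia) hFu hcard
  obtain rfl : s = 0 :=
    hmax.eq_zero_of_pairwiseDisjoint_diffSet hn (by lia) (fun a ha => hFS a (hJF ha)) hdisj hv
  obtain ⟨a, ha, b, hb, hab⟩ := Finset.one_lt_card.mp (by lia : 1 < #J)
  exact hab ((hDist_eq_zero.mp (hv a ha)).trans (hDist_eq_zero.mp (hv b hb)).symm)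

section TriangleDefect

variable {n : ℕ} {a c u : ℕ → Fin n} {D : Finset ℕ}

theorem hDist_eq_encard_sdiff_add_sum (a b : ℕ → Fin n) (D : Finset ℕ) :
    hDist n a b = (diffSet a b \ D).encard + (∑ i ∈ D, if a i ≠ b i then 1 else 0 : ℕ) := by
  have hinter : diffSet a b ∩ D = ({i ∈ D | a i ≠ b i} : Finset ℕ) := by
    ext i
    simp [mem_diffSet, and_comm]
  rw [← encard_diffSet, ← Set.encard_sdiff_add_encard_inter (diffSet a b) D, hinter,
    Set.encard_coe_eq_coe_finsetCard, Finset.card_filter]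

/-- At a coordinate `i` with `u i ≠ c i`, the contribution of the letter `x = a i` to the defect
`hDist n a u + hDist n u c - hDist n a c` of the triangle inequality. -/
def excess (u c : ℕ → Fin n) (i : ℕ) (x : Fin n) : ℕ :=
  (if x ≠ u i then 1 else 0) + if x = c i then 1 else 0

theorem sum_excess (u c : ℕ → Fin n) (i : ℕ) : ∑ x, excess u c i x = n := by
  have : 0 < n := (u i).pos
  simp only [excess, Finset.sum_add_distrib, Finset.sum_ite_eq', Finset.mem_univ, if_true,
    ← Finset.card_filter, Finset.filter_ne', Finset.card_erase_of_mem, Finset.card_univ,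
    Fintype.card_fin]
  lia

theorem excess_le_two (u c : ℕ → Fin n) (i : ℕ) (x : Fin n) : excess u c i x ≤ 2 := by
  unfold excess
  split_ifs <;> lia

theorem excess_self (hD : (D : Set ℕ) = diffSet u c) {i : ℕ} (hi : i ∈ D) :
    excess u c i (u i) = 0 := by
  have hne : u i ≠ c i := mem_diffSet.mp (hD ▸ Finset.mem_coe.mpr hi)
  simp [excess, hne]

theorem card_eq_hDist (hD : (D : Set ℕ) = diffSet u c) : (#D : ℕ∞) = hDist n u c := by
  rw [← encard_diffSet, ← hD, Set.encard_coe_eq_coe_finsetCard]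

theorem hDist_add_sum_excess (hD : (D : Set ℕ) = diffSet u c) (a : ℕ → Fin n) :
    hDist n a c + (∑ i ∈ D, excess u c i (a i) : ℕ) = hDist n a u + hDist n u c := by
  have hmemD : ∀ i, i ∈ D ↔ u i ≠ c i := fun i => by
    rw [← Finset.mem_coe, hD, mem_diffSet]
  have hoff : diffSet a c \ D = diffSet a u \ D := by
    ext i
    simp only [Set.mem_sdiff, mem_diffSet, Finset.mem_coe, hmemD]
    grind
  have hsum : (∑ i ∈ D, if a i ≠ c i then 1 else 0) + ∑ i ∈ D, excess u c i (a i) =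
      (∑ i ∈ D, if a i ≠ u i then 1 else 0) + #D := by
    rw [Finset.card_eq_sum_ones, ← Finset.sum_add_distrib, ← Finset.sum_add_distrib]
    refine Finset.sum_congr rfl fun i hi => ?_
    have := (hmemD i).mp hi
    unfold excess
    split_ifs <;> simp_all
  rw [hDist_eq_encard_sdiff_add_sum a c D, hDist_eq_encard_sdiff_add_sum a u D, hoff,
    ← card_eq_hDist hD, add_assoc, add_assoc]
  exact_mod_cast congrArg (fun j : ℕ => (diffSet a u \ D).encard + j) hsum

theorem add_card_le_add_sum_excess (hD : (D : Set ℕ) = diffSet u c) {r d : ℕ}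
    (hau : hDist n a u = r) (hac : hDist n a c ≤ d) :
    r + #D ≤ d + ∑ i ∈ D, excess u c i (a i) := by
  have hle : (r : ℕ∞) + #D ≤ d + (∑ i ∈ D, excess u c i (a i) : ℕ) := calc
    (r : ℕ∞) + #D = hDist n a u + hDist n u c := by rw [hau, card_eq_hDist hD]
    _ = hDist n a c + (∑ i ∈ D, excess u c i (a i) : ℕ) := (hDist_add_sum_excess hD a).symm
    _ ≤ d + (∑ i ∈ D, excess u c i (a i) : ℕ) := by gcongr
  exact_mod_cast hle

end TriangleDefect

theorem card_mul_le_of_forall_le_sum {ι β : Type*} [Fintype β] [DecidableEq β]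
    {F : Finset (ι → β)} {E : Finset ι} {weight : ι → β → ℕ} {M W : ℕ} {B : ℝ}
    (hM : ∀ a ∈ F, M ≤ ∑ i ∈ E, weight i (a i)) (hW : ∀ i ∈ E, ∑ x, weight i x = W)
    (hB : ∀ i ∈ E, ∀ x, weight i x ≠ 0 → (#{a ∈ F | a i = x} : ℝ) ≤ B) :
    (#F : ℝ) * M ≤ #E * (W * B) := calc
  (#F : ℝ) * M = ∑ _a ∈ F, (M : ℝ) := by rw [Finset.sum_const, nsmul_eq_mul]
  _ ≤ ∑ a ∈ F, ∑ i ∈ E, (weight i (a i) : ℝ) := Finset.sum_le_sum fun a ha => mod_cast hM a ha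
  _ = ∑ i ∈ E, ∑ a ∈ F, (weight i (a i) : ℝ) := Finset.sum_comm
  _ = ∑ i ∈ E, ∑ x, (weight i x : ℝ) * #{a ∈ F | a i = x} := by
    refine Finset.sum_congr rfl fun i _ => ?_
    rw [← Finset.sum_fiberwise' F (fun a => a i) fun x => (weight i x : ℝ)]
    simp only [Finset.sum_const, nsmul_eq_mul, mul_comm]
  _ ≤ ∑ i ∈ E, ∑ x, (weight i x : ℝ) * B := by
    refine Finset.sum_le_sum fun i hi => Finset.sum_le_sum fun x _ => ?_
    obtain hx | hx := eq_or_ne (weight i x) 0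
    · simp [hx]
    · exact mul_le_mul_of_nonneg_left (hB i hi x hx) (Nat.cast_nonneg _)
  _ = #E * (W * B) := by
    rw [← nsmul_eq_mul, ← Finset.sum_const]
    refine Finset.sum_congr rfl fun i hi => ?_
    rw [← Finset.sum_mul, ← Nat.cast_sum, hW i hi]

/- With `e ≤ (y + x) / 2` coordinates and total weight at least `q + x` per word, the averaging
bound `(y + x) / (q + x)` is largest at `x = 0`, since `q ≤ y`. -/
theorem mul_le_of_mul_add_le {f q x y e n B : ℝ} (hq : 0 < q) (hqy : q ≤ y) (hx : 0 ≤ x)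
    (hn : 0 ≤ n) (hB : 0 ≤ B) (he : 2 * e ≤ y + x) (hf : f * (q + x) ≤ e * (n * B)) :
    f * q ≤ n / 2 * y * B := by
  have hpos : 0 < q + x := by linarith
  refine le_of_mul_le_mul_right ?_ hpos
  calc f * q * (q + x) = f * (q + x) * q := by ring
    _ ≤ e * (n * B) * q := by gcongr
    _ ≤ (y + x) / 2 * (n * B) * q := by gcongr; linarith
    _ = n / 2 * B * (y * q + x * q) := by ring
    _ ≤ n / 2 * B * (y * q + x * y) := by gcongr
    _ = n / 2 * y * B * (q + x) := by ring

section Layers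

variable {n d ℓ L m k q : ℕ} {S : Set (ℕ → Fin n)} {a c u w : ℕ → Fin n} {D : Finset ℕ}

/-- The set `S^{(ℓ)}_k[t]` for the template `t` that fixes the letters of `u` at the coordinates
where `u` and `w` differ. Every template that is regular with respect to `w` arises from some
word `u` in this way, and has weight `hDist n u w`. -/
def layer (S : Set (ℕ → Fin n)) (ℓ : ℕ) (w : ℕ → Fin n) (k : ℕ) (u : ℕ → Fin n) :
    Set (ℕ → Fin n) :=
  {a ∈ Sell n S ℓ | hDist n a w = k ∧ ∀ i, u i ≠ w i → a i = u i}

theorem hDist_eq_of_mem_layer {r : ℕ} (hu : hDist n u w = m) (hk : m + r = k)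
    (ha : a ∈ layer S ℓ w k u) : hDist n a u = r := by
  have hdisj : Disjoint (diffSet a u) (diffSet u w) :=
    Set.disjoint_left.mpr fun i hau huw => hau (ha.2.2 i huw)
  have hadd : hDist n a u + m = r + m := by
    rw [← hu, hDist_add_hDist_of_disjoint hdisj, ha.2.1, ← hk, hu, Nat.cast_add, add_comm]
  exact ENat.add_left_injective_of_ne_top (ENat.natCast_ne_top m) hadd

theorem mem_layer_update {i : ℕ} (ha : a ∈ layer S ℓ w k u) :
    a ∈ layer S ℓ w k (Function.update u i (a i)) := by
  refine ⟨ha.1, ha.2.1, fun j hj => ?_⟩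
  obtain rfl | hji := eq_or_ne j i
  · simp
  · rw [Function.update_of_ne hji] at hj ⊢
    exact ha.2.2 j hj

theorem sum_filter_excess_eq_sum (hD : (D : Set ℕ) = diffSet u c)
    (ha : ∀ i, u i ≠ w i → a i = u i) :
    ∑ i ∈ D with u i = w i, excess u c i (a i) = ∑ i ∈ D, excess u c i (a i) := by
  refine Finset.sum_filter_of_ne fun i hi hne => by_contra fun hiw => hne ?_
  rw [ha i hiw, excess_self hD hi]

/- The bound is the triangle inequality for `w`, `u`, `c` with its defect estimated coordinatewise:
coordinates with `u i = w i` contribute nothing, the others at most two. -/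
theorem two_mul_card_filter_add_le (hD : (D : Set ℕ) = diffSet u c) (hu : hDist n u w = m)
    (hwc : hDist n w c ≤ d) : 2 * #{i ∈ D | u i = w i} + m ≤ d + #D := by
  have hexcess : ∑ i ∈ D, excess u c i (w i) ≤ 2 * #{i ∈ D | u i ≠ w i} := calc
    ∑ i ∈ D, excess u c i (w i) = ∑ i ∈ D with u i ≠ w i, excess u c i (w i) := by
      refine (Finset.sum_filter_of_ne (p := fun i => u i ≠ w i) fun i hi hne hiw => hne ?_).symm
      rw [← hiw, excess_self hD hi]
    _ ≤ #{i ∈ D | u i ≠ w i} • 2 := Finset.sum_le_card_nsmul _ _ _ fun i _ => excess_le_two u c i _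
    _ = 2 * #{i ∈ D | u i ≠ w i} := by rw [smul_eq_mul, mul_comm]
  have hsplit := Finset.card_filter_add_card_filter_not (s := D) (fun i => u i = w i)
  have hdefect := add_card_le_add_sum_excess hD ((hDist_comm w u).trans hu) hwc
  lia

theorem card_mul_le_of_card_fiber_le (hmax : IsDMaximal n d S) (hn : 2 ≤ n)
    (hball : ¬ ContainsBall n S (L + 1)) (hw : w ∈ S) (hu : hDist n u w = m) (hq : 0 < q)
    (hk : m + L + q = k) (hkd : k ≤ d) {F : Finset (ℕ → Fin n)} (hF : ∀ a ∈ F, a ∈ layer S ℓ w k u)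
    {B : ℝ} (hB : 0 ≤ B)
    (hfiber : ∀ i x, u i = w i → x ≠ w i → (#{a ∈ F | a i = x} : ℝ) ≤ B) :
    (#F : ℝ) * q ≤ n / 2 * (2 * d - m - L : ℕ) * B := by
  obtain ⟨c, hc, hdc⟩ := hmax.exists_le_hDist_add hn hball u
  obtain ⟨D, hD⟩ : ∃ D : Finset ℕ, (D : Set ℕ) = diffSet u c := by
    have huw : hDist n u w ≠ ⊤ := hu ▸ ENat.natCast_ne_top m
    have hwc : hDist n w c ≠ ⊤ := ne_top_of_le_ne_top (ENat.natCast_ne_top d) (hmax.hDist_le hw hc)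
    have huc : hDist n u c ≠ ⊤ :=
      ne_top_of_le_ne_top (WithTop.add_ne_top.mpr ⟨huw, hwc⟩) (hDist_triangle u w c)
    exact (Set.encard_ne_top_iff.mp huc).exists_finset_coe
  have hdD : d ≤ #D + L := by rw [← card_eq_hDist hD] at hdc; exact_mod_cast hdc
  obtain ⟨x, hx⟩ := Nat.exists_eq_add_of_le hdD
  have hE := two_mul_card_filter_add_le hD hu (hmax.hDist_le hw hc)
  have hweight : ∀ a ∈ F, q + x ≤ ∑ i ∈ D with u i = w i, excess u c i (a i) := fun a ha => by
    have hau : hDist n a u = (L + q : ℕ) := hDist_eq_of_mem_layer hu (by lia) (hF a ha)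
    have hdefect := add_card_le_add_sum_excess hD hau (hmax.hDist_le (hF a ha).1.1 hc)
    rw [sum_filter_excess_eq_sum hD (hF a ha).2.2]
    lia
  refine mul_le_of_mul_add_le (e := #{i ∈ D | u i = w i}) (x := x) (mod_cast hq)
    (mod_cast (by lia : q ≤ 2 * d - m - L)) x.cast_nonneg n.cast_nonneg hB
    (mod_cast (by lia : 2 * #{i ∈ D | u i = w i} ≤ 2 * d - m - L + x)) ?_
  rw [← Nat.cast_add]
  refine card_mul_le_of_forall_le_sum hweight (fun i _ => sum_excess u c i) fun i hi y hy => ?_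
  obtain ⟨hiD, hiw⟩ := Finset.mem_filter.mp hi
  refine hfiber i y hiw fun hyw => hy ?_
  rw [hyw, ← hiw, excess_self hD hiD]

theorem card_le_of_subset_layer (hmax : IsDMaximal n d S) (hn : 2 ≤ n) (hd : 1 ≤ d)
    (hball : ¬ ContainsBall n S (L + 1)) (hw : w ∈ S) (hu : hDist n u w = m)
    (hk : m + L + q = k) (hkd : k ≤ d) {F : Finset (ℕ → Fin n)}
    (hF : ∀ a ∈ F, a ∈ layer S ℓ w k u) :
    (#F : ℝ) ≤ Sun (d + n) (2 * L) * (n / 2) ^ q * (2 * d - m - L).choose q := by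
  induction q generalizing u m F with
  | zero =>
    have hau : ∀ a ∈ F, hDist n a u = L := fun a ha => hDist_eq_of_mem_layer hu hk (hF a ha)
    simpa using hmax.card_le_sun hn hd (fun a ha => (hF a ha).1) hau
  | succ q ih =>
    obtain ⟨y, hy⟩ : ∃ y, 2 * d - m - L = y + 1 := Nat.exists_eq_succ_of_ne_zero (by lia)
    have hfiber : ∀ i x, u i = w i → x ≠ w i → (#{a ∈ F | a i = x} : ℝ) ≤
        Sun (d + n) (2 * L) * (n / 2) ^ q * y.choose q := fun i x hi hx => by
      rw [(by lia : y = 2 * d - (m + 1) - L)]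
      refine ih (u := Function.update u i x) (m := m + 1) ?_ (by lia) fun a ha => ?_
      · rw [hDist_update_of_eq hi hx, hu, Nat.cast_add_one]
      · obtain ⟨haF, rfl⟩ := Finset.mem_filter.mp ha
        exact mem_layer_update (hF a haF)
    have hstep := card_mul_le_of_card_fiber_le hmax hn hball hw hu q.succ_pos hk hkd hF
      (by positivity) hfiber
    rw [hy] at hstep ⊢
    have hchoose : ((y + 1 : ℕ) : ℝ) * y.choose q = (y + 1).choose (q + 1) * (q + 1 : ℕ) :=
      mod_cast Nat.add_one_mul_choose_eq y q
    refine le_of_mul_le_mul_right (hstep.trans_eq ?_) (Nat.cast_pos.mpr q.succ_pos)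
    rw [pow_succ]
    linear_combination (Sun (d + n) (2 * L) : ℝ) * (n / 2) ^ q * (n / 2) * hchoose

end Layers

section Templates

variable {n k ℓ : ℕ} {S : Set (ℕ → Fin n)} {w : ℕ → Fin n} {t : ℕ → Option (Fin n)}

/-- The word obtained from the template `t` by replacing each wildcard by the letter of `w`. -/
def fillTemplate (w : ℕ → Fin n) (t : ℕ → Option (Fin n)) (i : ℕ) : Fin n := (t i).getD (w i)

theorem fillTemplate_ne_iff (hreg : RegularWrt n w t) {i : ℕ} :
    fillTemplate w t i ≠ w i ↔ t i ≠ none := by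
  have := hreg i
  cases h : t i <;> simp_all [fillTemplate]

theorem hDist_fillTemplate (hreg : RegularWrt n w t) :
    hDist n (fillTemplate w t) w = {i | t i ≠ none}.encard :=
  congrArg Set.encard (Set.ext fun _ => fillTemplate_ne_iff hreg)

theorem layer_fillTemplate (hreg : RegularWrt n w t) :
    layer S ℓ w k (fillTemplate w t) =
      {a ∈ Sell n S ℓ | hDist n a w = (k : ℕ∞) ∧ Fits n a t} := by
  ext a
  refine and_congr_right fun _ => and_congr_right fun _ => forall_congr' fun i => ?_
  rw [fillTemplate_ne_iff hreg]
  cases h : t i <;> simp [fillTemplate, h]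

end Templates

theorem finite_and_ncard_le_of_forall_finset {α : Type*} {s : Set α} {B : ℝ}
    (h : ∀ F : Finset α, (∀ a ∈ F, a ∈ s) → (#F : ℝ) ≤ B) : s.Finite ∧ (s.ncard : ℝ) ≤ B := by
  have hfin : s.Finite := by
    by_contra hinf
    obtain ⟨N, hN⟩ := exists_nat_gt B
    obtain ⟨F, hFs, hF⟩ := Set.Infinite.exists_subset_card_eq hinf N
    exact (h F fun a ha => hFs ha).not_gt (hF ▸ hN)
  refine ⟨hfin, ?_⟩
  rw [Set.ncard_eq_toFinset_card s hfin]
  exact h _ fun a ha => hfin.mem_toFinset.mp ha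

theorem stmt11_general (n d L : ℕ) (hn : 2 ≤ n) (hd : 1 ≤ d)
    (S : Set (ℕ → Fin n)) (hmax : IsDMaximal n d S) (hball : ¬ ContainsBall n S (L + 1))
    (w : ℕ → Fin n) (hw : w ∈ S)
    (ℓ m k : ℕ) (hmk : m + L ≤ k) (hkd : k ≤ d)
    (t : ℕ → Option (Fin n)) (htfin : {i | t i ≠ none}.Finite)
    (hwt : {i | t i ≠ none}.ncard = m) (hreg : RegularWrt n w t) :
    {a ∈ Sell n S ℓ | hDist n a w = (k : ℕ∞) ∧ Fits n a t}.Finite ∧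
      (({a ∈ Sell n S ℓ | hDist n a w = (k : ℕ∞) ∧ Fits n a t}.ncard : ℝ) ≤
        (Sun (d + n) (2 * L) : ℝ) * ((n : ℝ) / 2) ^ (k - m - L) *
          ((2 * d - m - L).choose (k - m - L) : ℝ)) := by
  have hu : hDist n (fillTemplate w t) w = m := by
    rw [hDist_fillTemplate hreg, ← htfin.cast_ncard_eq, hwt]
  rw [← layer_fillTemplate hreg]
  exact finite_and_ncard_le_of_forall_finset fun F hF =>
    card_le_of_subset_layer hmax hn hd hball hw hu (by lia) hkd hF

theorem stmt11 (n d L : ℕ) (hn : 2 ≤ n) (hd : 1 ≤ d) (hL : 2 * L ≤ d)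
    (S : Set (ℕ → Fin n)) (hmax : IsDMaximal n d S) (hball : ¬ ContainsBall n S (L + 1))
    (w : ℕ → Fin n) (hw : w ∈ S)
    (ℓ m k : ℕ) (hmk : m + L ≤ k) (hkd : k ≤ d)
    (t : ℕ → Option (Fin n)) (htfin : {i | t i ≠ none}.Finite)
    (hwt : {i | t i ≠ none}.ncard = m) (hreg : RegularWrt n w t) :
    {a ∈ Sell n S ℓ | hDist n a w = (k : ℕ∞) ∧ Fits n a t}.Finite ∧
      (({a ∈ Sell n S ℓ | hDist n a w = (k : ℕ∞) ∧ Fits n a t}.ncard : ℝ) ≤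
        (Sun (d + n) (2 * L) : ℝ) * ((n : ℝ) / 2) ^ (k - m - L) *
          ((2 * d - m - L).choose (k - m - L) : ℝ)) :=
  stmt11_general n d L hn hd S hmax hball w hw ℓ m k hmk hkd t htfin hwt hreg
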